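/- Let w(y) = (1 + √(1−y))^(−1/2), y(x) = 8x(2x+1)/(4x+1)², v(x) = x(2x+1)(4x+1), and define the probability generating function P(x, z) = w(y(x)·z)/w(y(x)) for x > 0 and z with 0 < z·y(x) < 1. Then P satisfies the first-order partial differential equation v(x)·∂P/∂x − z·∂P/∂z + x·P = 0 at every such (x, z), and P(x, 1) = 1. -/

import Mathlib

open Real

noncomputable def w (y : ℝ) : ℝ := (1 + Real.sqrt (1 - y)) ^ (-(1 / 2 : ℝ))

noncomputable def yFun (x : ℝ) : ℝ := 8 * x * (2 * x + 1) / (4 * x + 1) ^ 2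

noncomputable def v (x : ℝ) : ℝ := x * (2 * x + 1) * (4 * x + 1)

noncomputable def P (x z : ℝ) : ℝ := w (yFun x * z) / w (yFun x)

theorem w_pos (y : ℝ) : 0 < w y := by
  unfold w
  have := Real.sqrt_nonneg (1 - y)
  exact Real.rpow_pos_of_pos (by linarith) _

theorem w_hasDerivAt (y : ℝ) (hy : y < 1) :
    HasDerivAt w (w y / (4 * √(1 - y) * (1 + √(1 - y)))) y := by
  have hs : 0 < √(1 - y) := Real.sqrt_pos.mpr (by linarith)
  have h1 : HasDerivAt (fun t : ℝ => 1 + √(1 - t)) (-1 / (2 * √(1 - y))) y :=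
    (((hasDerivAt_id y).const_sub 1).sqrt (by simp only [id]; linarith)).const_add 1
  have h2 := h1.rpow_const (p := -(1 / 2 : ℝ)) (Or.inl (by positivity))
  have h3 : (1 + √(1 - y)) ^ (-(1 / 2 : ℝ) - 1) = w y / (1 + √(1 - y)) := by
    rw [Real.rpow_sub_one (by positivity)]; rfl
  rw [h3] at h2
  refine h2.congr_deriv ?_
  field_simp
  ring

theorem one_sub_yFun (x : ℝ) (hx : 0 < x) : 1 - yFun x = (1 / (4 * x + 1)) ^ 2 := by
  unfold yFun
  field_simp
  ring

theorem yFun_hasDerivAt (x : ℝ) (hx : 0 < x) : HasDerivAt yFun (8 / (4 * x + 1) ^ 3) x := by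
  have hne : (4 * x + 1) ^ 2 ≠ 0 := by positivity
  have hi := hasDerivAt_id x
  have h := (((hi.const_mul 8).mul ((hi.const_mul 2).add_const 1)).div
    (((hi.const_mul 4).add_const 1).pow 2) hne)
  refine h.congr_deriv ?_
  simp
  field_simp
  ring

theorem pgf_pde (x z : ℝ) (hx : 0 < x) (hz0 : 0 < z * yFun x) (hz1 : z * yFun x < 1) :
    DifferentiableAt ℝ (fun t => P t z) x ∧
    DifferentiableAt ℝ (fun t => P x t) z ∧
    v x * deriv (fun t => P t z) x - z * deriv (fun t => P x t) z + x * P x z = 0 ∧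
    P x 1 = 1 := by
  have hw := (w_pos (yFun x)).ne'
  have h1y := one_sub_yFun x hx
  have hs : √(1 - yFun x) = 1 / (4 * x + 1) := by
    rw [h1y]; exact Real.sqrt_sq (by positivity)
  have hy1 : yFun x < 1 := by
    have : 0 < (1 / (4 * x + 1)) ^ 2 := by positivity
    linarith
  have hyd := yFun_hasDerivAt x hx
  have hwy := w_hasDerivAt _ hy1
  rw [hs] at hwy
  have hwz := w_hasDerivAt (yFun x * z) (by linarith)
  generalize w (yFun x * z) / (4 * √(1 - yFun x * z) * (1 + √(1 - yFun x * z))) = D at hwz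
  have hc1 : HasDerivAt (fun t => w (yFun t * z)) (D * (8 / (4 * x + 1) ^ 3 * z)) x :=
    HasDerivAt.comp (h₂ := w) x hwz (hyd.mul_const z)
  have hc2 : HasDerivAt (fun t => w (yFun t)) _ x := HasDerivAt.comp (h₂ := w) x hwy hyd
  have hc3 : HasDerivAt (fun t => w (yFun x * t)) (D * (yFun x * 1)) z :=
    HasDerivAt.comp (h₂ := w) z hwz ((hasDerivAt_id z).const_mul (yFun x))
  have hX := hc1.fun_div hc2 hw
  have hZ := hc3.div_const (w (yFun x))
  change HasDerivAt (fun t => P t z) _ x at hX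
  change HasDerivAt (fun t => P x t) _ z at hZ
  refine ⟨hX.differentiableAt, hZ.differentiableAt, ?_, by simp [P, hw]⟩
  rw [hX.deriv, hZ.deriv]
  simp only [P, v, Function.comp]
  have hy : yFun x = 8 * x * (2 * x + 1) / (4 * x + 1) ^ 2 := rfl
  generalize w (yFun x * z) = A
  generalize w (yFun x) = B at *
  rw [hy]
  have e : 1 + 1 / (4 * x + 1) = 2 * (2 * x + 1) / (4 * x + 1) := by field_simp; ring
  rw [e]
  field_simp
  ring
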